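/- Let n, R, K be positive integers, let r > 0, and let m be a positive integer. Let D ∈ ℝ^{n×R} have exactly K distinct row values, with any two distinct row values of D at Euclidean distance at least 3r, and with each distinct row value of D occurring as a row of D for more than m indices. Let C ∈ ℝ^{n×R} have at most K distinct row values, and suppose |{i : ‖C_{i,·} − D_{i,·}‖₂ ≥ r}| ≤ m. Then there exists a map π from the set of distinct row values of D to the set of distinct row values of C which is injective and satisfies: for every index i with ‖C_{i,·} − D_{i,·}‖₂ < r, C_{i,·} = π(D_{i,·}). In particular, |{i : C_{i,·} ≠ π(D_{i,·})}| ≤ |{i : ‖C_{i,·} − D_{i,·}‖₂ ≥ r}|. -/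

import Mathlib

open Matrix

/-- The Euclidean distance between two vectors in `ℝ^R` (e.g. two rows of a matrix). -/
noncomputable def rowDist {R : ℕ} (a b : Fin R → ℝ) : ℝ :=
  Real.sqrt (∑ k, (a k - b k) ^ 2)

/-!
The balls of radius `r` about the row values of `D` are disjoint by separation, and each contains a
row of `C`: a row value of `D` occurs too often for all its occurrences to be far from `C`. Choosing
a row value of `C` in each ball is therefore injective and, as `C` has no more row values than `D`,
exhausts the row values of `C`. Hence no ball contains a second row value of `C`, so a row of `C`
lying within `r` of the corresponding row of `D` is the chosen one.
-/

section Capture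

variable {α β : Type*} {s : Set α} {t : Set β} {U : α → Set β} {π : α → β}

theorem injOn_of_pairwiseDisjoint_of_mem (hU : s.PairwiseDisjoint U)
    (hπ : ∀ x ∈ s, π x ∈ U x) : Set.InjOn π s := fun x hx y hy hxy =>
  hU.elim_set hx hy (π x) (hπ x hx) (hxy ▸ hπ y hy)

theorem bijOn_of_injOn_of_ncard_le (ht : t.Finite) (hmaps : Set.MapsTo π s t)
    (hinj : Set.InjOn π s) (hcard : t.ncard ≤ s.ncard) : Set.BijOn π s t :=
  ⟨hmaps, hinj, (Set.eq_of_subset_of_ncard_le hmaps.image_subset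
    (hcard.trans_eq hinj.ncard_image.symm) ht).ge⟩

theorem eq_of_surjOn_of_pairwiseDisjoint_of_mem (hU : s.PairwiseDisjoint U)
    (hπ : ∀ x ∈ s, π x ∈ U x) (hsurj : Set.SurjOn π s t) {x : α} {y : β}
    (hx : x ∈ s) (hy : y ∈ t) (hyx : y ∈ U x) : y = π x := by
  obtain ⟨z, hz, rfl⟩ := hsurj hy
  rw [hU.elim_set hz hx (π z) (hπ z hz) hyx]

end Capture

theorem pairwiseDisjoint_ball_of_two_mul_le_dist {X : Type*} [PseudoMetricSpace X] {s : Set X}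
    {r : ℝ} (hs : s.Pairwise fun x y => 2 * r ≤ dist x y) :
    s.PairwiseDisjoint (Metric.ball · r) := fun _ hx _ hy hxy =>
  Metric.ball_disjoint_ball ((two_mul r).symm.trans_le (hs hx hy hxy))

theorem exists_dist_lt_of_ncard_lt {ι X : Type*} [PseudoMetricSpace X] {C D : ι → X} {r : ℝ}
    {i : ι} (hfin : {j | r ≤ dist (C j) (D j)}.Finite)
    (hcard : {j | r ≤ dist (C j) (D j)}.ncard < {j | D j = D i}.ncard) :
    ∃ j, D j = D i ∧ dist (C j) (D j) < r :=
  (Set.exists_mem_notMem_of_ncard_lt_ncard hcard hfin).imp fun _ hj => ⟨hj.1, not_le.mp hj.2⟩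

theorem stmt14_general {ι X : Type*} [PseudoMetricSpace X] {C D : ι → X} {r : ℝ}
    (hsep : ∀ i j, D i ≠ D j → 2 * r ≤ dist (D i) (D j))
    (hgood : ∀ i, ∃ j, D j = D i ∧ dist (C j) (D j) < r)
    (hfin : (Set.range C).Finite) (hcard : (Set.range C).ncard ≤ (Set.range D).ncard) :
    ∃ π : X → X, Set.BijOn π (Set.range D) (Set.range C) ∧
      ∀ i, dist (C i) (D i) < r → C i = π (D i) := by
  have hballs : (Set.range D).PairwiseDisjoint (Metric.ball · r) := by
    apply pairwiseDisjoint_ball_of_two_mul_le_dist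
    rintro _ ⟨i, rfl⟩ _ ⟨j, rfl⟩
    exact hsep i j
  have hcapture : ∀ x ∈ Set.range D, ∃ y ∈ Set.range C, y ∈ Metric.ball x r := by
    rintro _ ⟨i, rfl⟩
    obtain ⟨j, hji, hj⟩ := hgood i
    exact ⟨C j, ⟨j, rfl⟩, hji ▸ Metric.mem_ball.mpr hj⟩
  choose! π hmaps hπ using hcapture
  have hbij : Set.BijOn π (Set.range D) (Set.range C) :=
    bijOn_of_injOn_of_ncard_le hfin hmaps (injOn_of_pairwiseDisjoint_of_mem hballs hπ) hcard
  exact ⟨π, hbij, fun i =>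
    eq_of_surjOn_of_pairwiseDisjoint_of_mem hballs hπ hbij.surjOn ⟨i, rfl⟩ ⟨i, rfl⟩⟩

theorem rowDist_eq_dist_toLp {R : ℕ} (a b : Fin R → ℝ) :
    rowDist a b = dist (WithLp.toLp 2 a) (WithLp.toLp 2 b) := by
  simp only [rowDist, EuclideanSpace.dist_eq, Real.dist_eq, sq_abs]

/-- The Euclidean metric on `Fin R → ℝ`, with distance `rowDist`, in which rows of matrices are
compared. It is not an instance because `Fin R → ℝ` already carries the sup metric. -/
noncomputable abbrev rowPseudoMetricSpace (R : ℕ) : PseudoMetricSpace (Fin R → ℝ) where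
  dist := rowDist
  dist_self a := by rw [rowDist_eq_dist_toLp, dist_self]
  dist_comm a b := by simp only [rowDist_eq_dist_toLp, dist_comm]
  dist_triangle a b c := by simpa only [rowDist_eq_dist_toLp] using dist_triangle _ _ _

/-- the deterministic clustering/pigeonhole core of the proof of Theorem 2.1:
there is an injective matching `π` from the row values of `D` to the row values of `C` with
`C_{i,·} = π(D_{i,·})` whenever `‖C_{i,·} - D_{i,·}‖₂ < r`; in particular the number of
misassigned indices is bounded by the number of rows where `C` and `D` differ by at least `r`. -/
theorem stmt14 {n R K m : ℕ} (hm : 0 < m) (r : ℝ) (hr : 0 < r)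
    (D C : Matrix (Fin n) (Fin R) ℝ)
    (hKrows : (Set.range fun i => D i).ncard = K)
    (hsep : ∀ i j, D i ≠ D j → 3 * r ≤ rowDist (D i) (D j))
    (hocc : ∀ i, m < {j | D j = D i}.ncard)
    (hCK : (Set.range fun i => C i).ncard ≤ K)
    (hbad : {i | r ≤ rowDist (C i) (D i)}.ncard ≤ m) :
    ∃ π : (Fin R → ℝ) → (Fin R → ℝ),
      Set.InjOn π (Set.range fun i => D i) ∧
      Set.MapsTo π (Set.range fun i => D i) (Set.range fun i => C i) ∧
      (∀ i, rowDist (C i) (D i) < r → C i = π (D i)) ∧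
      {i | C i ≠ π (D i)}.ncard ≤ {i | r ≤ rowDist (C i) (D i)}.ncard := by
  let := rowPseudoMetricSpace R
  obtain ⟨π, hbij, hmatch⟩ := stmt14_general (C := fun i => C i) (D := fun i => D i)
    (fun i j hij => (by gcongr; norm_num : 2 * r ≤ 3 * r).trans (hsep i j hij))
    (fun i => exists_dist_lt_of_ncard_lt (Set.toFinite _) (hbad.trans_lt (hocc i)))
    (Set.finite_range _) (hCK.trans_eq hKrows.symm)
  exact ⟨π, hbij.injOn, hbij.mapsTo, hmatch,
    Set.ncard_le_ncard fun i hi => not_lt.mp (mt (hmatch i) hi)⟩
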